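/- Let A be a finite-dimensional real affine space over V and let g be a nonzero nondegenerate symmetric bilinear form on V. Then the Cayley–Menger form CM_g is a nondegenerate symmetric bilinear form on the dual space of W_g: the only functional φ on W_g with CM_g(φ, ψ) = 0 for all functionals ψ on W_g is φ = 0. -/

import Mathlib

/-!
The second difference `δ ↦ δ (P + v) - 2 δ P + δ (P - v)` multiplies the Hessian coefficient of `δ`
by `g v v`. It kills the affine functions, so it is `C`-orthogonal to every functional annihilating
`1`, while isotropy of the evaluations forces its product with `ev_P` to be `g v v`. Hence
`C (secondDiff g P v) φ = g v v * φ 1` for every `φ`.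

Let `φ` be in the radical of `C`, and choose `v` with `g v v ≠ 0`. Then `φ 1 = 0`, so `φ` is
represented by a vector `x`; pairing with differences of evaluations shows that `x` is in the
radical of `g`, so `x = 0` and `φ` kills the affine functions. These are exactly the kernel of the
second difference, so `φ = r • secondDiff g P v`, and `0 = C φ ev_P = r * g v v` gives `r = 0`.
-/

/-- A function `δ : A → ℝ` on a real affine space is *quadratic* if for all points
`P, Q` and all `α, β ∈ ℝ` with `α + β = 1`,
`δ(α·P + β·Q) = α(α−β)·δ(P) + β(β−α)·δ(Q) + 4αβ·δ(midpoint(P,Q))`. -/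
def IsQuadraticFn {V A : Type*} [AddCommGroup V] [Module ℝ V] [AddTorsor V A]
    (δ : A → ℝ) : Prop :=
  ∀ (P Q : A) (α β : ℝ), α + β = 1 →
    δ (AffineMap.lineMap P Q β) =
      α * (α - β) * δ P + β * (β - α) * δ Q + 4 * α * β * δ (midpoint ℝ P Q)

/-- `B` is the Hessian of `δ`. -/
def IsHessianOf {V A : Type*} [AddCommGroup V] [Module ℝ V] [AddTorsor V A]
    (δ : A → ℝ) (B : LinearMap.BilinForm ℝ V) : Prop :=
  ∀ P Q : A, 2 * δ P + 2 * δ Q - 4 * δ (midpoint ℝ P Q) =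
    (1/2 : ℝ) * B (Q -ᵥ P) (Q -ᵥ P)

/-- `W_g`: the space of quadratic functions `A → ℝ` whose Hessian is a scalar
multiple of `g`, as a submodule of `A → ℝ`. -/
def Wg {V : Type*} [AddCommGroup V] [Module ℝ V]
    (g : LinearMap.BilinForm ℝ V) (A : Type*) [AddTorsor V A] :
    Submodule ℝ (A → ℝ) where
  carrier := {δ : A → ℝ | IsQuadraticFn δ ∧ ∃ c : ℝ, IsHessianOf δ (c • g)}
  add_mem' := by
    rintro a b ⟨ha1, ca, ha2⟩ ⟨hb1, cb, hb2⟩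
    refine ⟨fun P Q α β h => ?_, ca + cb, fun P Q => ?_⟩
    · have h1 := ha1 P Q α β h
      have h2 := hb1 P Q α β h
      simp only [Pi.add_apply]
      linear_combination h1 + h2
    · have h1 := ha2 P Q
      have h2 := hb2 P Q
      simp only [Pi.add_apply, LinearMap.add_apply, LinearMap.smul_apply,
        smul_eq_mul] at h1 h2 ⊢
      linear_combination h1 + h2
  zero_mem' := by
    refine ⟨fun P Q α β h => ?_, 0, fun P Q => ?_⟩
    · simp only [Pi.zero_apply]; ring
    · simp only [Pi.zero_apply, zero_smul, LinearMap.zero_apply]; ring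
  smul_mem' := by
    rintro c a ⟨ha1, ca, ha2⟩
    refine ⟨fun P Q α β h => ?_, c * ca, fun P Q => ?_⟩
    · have h1 := ha1 P Q α β h
      simp only [Pi.smul_apply, smul_eq_mul]
      linear_combination c * h1
    · have h1 := ha2 P Q
      simp only [Pi.smul_apply, smul_eq_mul, LinearMap.smul_apply] at h1 ⊢
      linear_combination c * h1

/-- The evaluation functional `ev_P : W_g → ℝ` at a point `P`. -/
def evW {V : Type*} [AddCommGroup V] [Module ℝ V]
    (g : LinearMap.BilinForm ℝ V) {A : Type*} [AddTorsor V A] (P : A) :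
    Module.Dual ℝ (Wg g A) where
  toFun δ := (δ : A → ℝ) P
  map_add' x y := rfl
  map_smul' c x := rfl

/-- `φ` annihilates the constant function `1 ∈ W_g`. -/
def AnnihilatesOne {V : Type*} [AddCommGroup V] [Module ℝ V]
    (g : LinearMap.BilinForm ℝ V) {A : Type*} [AddTorsor V A]
    (φ : Module.Dual ℝ (Wg g A)) : Prop :=
  ∀ h1 : (fun _ : A => (1 : ℝ)) ∈ Wg g A, φ ⟨fun _ => (1 : ℝ), h1⟩ = 0

/-- `x ∈ V` represents the functional `φ` on `W_g`: for every affine function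
`f : A → ℝ` (an element of `W_g`), `φ(f) = (linear part of f)(x)`. -/
def Represents {V : Type*} [AddCommGroup V] [Module ℝ V]
    (g : LinearMap.BilinForm ℝ V) {A : Type*} [AddTorsor V A]
    (φ : Module.Dual ℝ (Wg g A)) (x : V) : Prop :=
  ∀ (f : A →ᵃ[ℝ] ℝ) (hf : ⇑f ∈ Wg g A), φ ⟨⇑f, hf⟩ = f.linear x

/-- `C` is a Cayley–Menger form for `g`: a symmetric bilinear form on the dual of
`W_g` such that (i) every evaluation functional `ev_P` is isotropic, and (ii) on
functionals annihilating the constant `1`, `C(φ, ψ) = −g(x_φ, x_ψ)`. -/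
def IsCayleyMenger {V : Type*} [AddCommGroup V] [Module ℝ V]
    (g : LinearMap.BilinForm ℝ V) (A : Type*) [AddTorsor V A]
    (C : LinearMap.BilinForm ℝ (Module.Dual ℝ (Wg g A))) : Prop :=
  (∀ φ ψ, C φ ψ = C ψ φ) ∧
  (∀ P : A, C (evW g P) (evW g P) = 0) ∧
  (∀ (φ ψ : Module.Dual ℝ (Wg g A)) (x y : V),
    AnnihilatesOne g φ → AnnihilatesOne g ψ →
    Represents g φ x → Represents g ψ y → C φ ψ = - g x y)

theorem exists_affineMap_coe_eq_of_map_lineMap {k V W A B : Type*} [Ring k] [Invertible (2 : k)]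
    [AddCommGroup V] [Module k V] [AddTorsor V A] [AddCommGroup W] [Module k W] [AddTorsor W B]
    {f : A → B}
    (hf : ∀ P Q (t : k), f (AffineMap.lineMap P Q t) = AffineMap.lineMap (f P) (f Q) t) :
    ∃ F : A →ᵃ[k] B, ⇑F = f := by
  obtain ⟨O⟩ : Nonempty A := inferInstance
  have map_midpoint (P Q : A) : f (midpoint k P Q) = midpoint k (f P) (f Q) := hf P Q _
  let L : V →+ W :=
    AddMonoidHom.ofMapMidpoint k k (fun v => f (v +ᵥ O) -ᵥ f O) (by simp) fun v w => by
      rw [← midpoint_vsub_midpoint, ← map_midpoint, ← midpoint_vadd_midpoint, midpoint_self,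
        midpoint_self]
  have L_smul (t : k) (v : V) : L (t • v) = t • L v := by
    change f (t • v +ᵥ O) -ᵥ f O = t • (f (v +ᵥ O) -ᵥ f O)
    rw [← AffineMap.lineMap_vadd_apply, hf, AffineMap.lineMap_vsub_left]
  exact ⟨AffineMap.mk' f { L with map_smul' := L_smul } O fun P => by simp [L], rfl⟩

section

variable {V A : Type*} [AddCommGroup V] [Module ℝ V] [AddTorsor V A]

theorem IsQuadraticFn.exists_affineMap_coe_eq {δ : A → ℝ} (hδ : IsQuadraticFn δ)
    (hδ₀ : IsHessianOf δ (0 : LinearMap.BilinForm ℝ V)) : ∃ f : A →ᵃ[ℝ] ℝ, ⇑f = δ := by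
  refine exists_affineMap_coe_eq_of_map_lineMap fun P Q t => ?_
  have map_midpoint : 2 * δ P + 2 * δ Q - 4 * δ (midpoint ℝ P Q) = 0 := by
    simpa only [LinearMap.zero_apply, mul_zero] using hδ₀ P Q
  rw [hδ P Q (1 - t) t (sub_add_cancel 1 t), AffineMap.lineMap_apply_ring]
  linear_combination -(1 - t) * t * map_midpoint

theorem isQuadraticFn_affineMap (f : A →ᵃ[ℝ] ℝ) : IsQuadraticFn f := by
  intro P Q α β hαβ
  obtain rfl : α = 1 - β := eq_sub_of_add_eq hαβ
  rw [f.apply_lineMap, f.map_midpoint, AffineMap.lineMap_apply_ring, midpoint_eq_smul_add,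
    smul_eq_mul, invOf_eq_inv]
  ring

theorem isHessianOf_affineMap_zero (f : A →ᵃ[ℝ] ℝ) :
    IsHessianOf f (0 : LinearMap.BilinForm ℝ V) := by
  intro P Q
  rw [f.map_midpoint, midpoint_eq_smul_add, smul_eq_mul, invOf_eq_inv, LinearMap.zero_apply,
    LinearMap.zero_apply]
  ring

theorem IsHessianOf.vadd_sub_two_mul_add_neg_vadd {δ : A → ℝ} {B : LinearMap.BilinForm ℝ V}
    (hδ : IsHessianOf δ B) (P : A) (v : V) :
    δ (v +ᵥ P) - 2 * δ P + δ (-v +ᵥ P) = B v v := by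
  have midpoint_eq : midpoint ℝ (-v +ᵥ P) (v +ᵥ P) = P := by
    rw [← midpoint_vadd_midpoint, midpoint_neg_self, midpoint_self, zero_vadd]
  have h := hδ (-v +ᵥ P) (v +ᵥ P)
  simp only [midpoint_eq, vadd_vsub_vadd_cancel_right, sub_neg_eq_add, map_add,
    LinearMap.add_apply] at h
  linarith

variable (g : LinearMap.BilinForm ℝ V)

/-- The inclusion of the affine functions into `W_g`. -/
def Wg.ofAffine : (A →ᵃ[ℝ] ℝ) →ₗ[ℝ] Wg g A where
  toFun f := ⟨f, isQuadraticFn_affineMap f, 0, by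
    rw [zero_smul]; exact isHessianOf_affineMap_zero f⟩
  map_add' _ _ := rfl
  map_smul' _ _ := rfl

/-- The second difference at `P` in the direction `v`, as a functional on `W_g`. When `g v v ≠ 0`
it is a nonzero multiple of the functional sending `δ` with Hessian `c • g` to `c`. -/
def secondDiff (P : A) (v : V) : Module.Dual ℝ (Wg g A) :=
  evW g (v +ᵥ P) - (2 : ℝ) • evW g P + evW g (-v +ᵥ P)

variable {g} {φ ψ : Module.Dual ℝ (Wg g A)} {x y : V}

theorem annihilatesOne_iff :
    AnnihilatesOne g φ ↔ φ (Wg.ofAffine g (AffineMap.const ℝ A 1)) = 0 :=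
  ⟨fun h => h _, fun h _ => h⟩

theorem represents_iff : Represents g φ x ↔ ∀ f, φ (Wg.ofAffine g f) = f.linear x :=
  forall_congr' fun _ => ⟨fun h => h _, fun h _ => h⟩

theorem represents_zero_iff :
    Represents g φ 0 ↔ LinearMap.range (Wg.ofAffine g) ≤ LinearMap.ker φ := by
  simp [represents_iff, LinearMap.range_le_ker_iff, LinearMap.ext_iff]

theorem Represents.annihilatesOne (hφ : Represents g φ x) : AnnihilatesOne g φ :=
  annihilatesOne_iff.2 (represents_iff.1 hφ _)

theorem AnnihilatesOne.exists_represents [FiniteDimensional ℝ V] (hφ : AnnihilatesOne g φ) :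
    ∃ x, Represents g φ x := by
  obtain ⟨P⟩ : Nonempty A := inferInstance
  let ι : Module.Dual ℝ V →ₗ[ℝ] A →ᵃ[ℝ] ℝ :=
    { toFun := fun l => l.toAffineMap.comp (AffineEquiv.vaddConst ℝ P).symm.toAffineMap
      map_add' := fun _ _ => rfl
      map_smul' := fun _ _ => rfl }
  obtain ⟨x, hx⟩ := (Module.evalEquiv ℝ V).surjective (φ ∘ₗ Wg.ofAffine g ∘ₗ ι)
  refine ⟨x, represents_iff.2 fun f => ?_⟩
  have eq_linear_add_const : f = ι f.linear + f P • AffineMap.const ℝ A 1 := by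
    ext Q
    change f Q = f.linear (Q -ᵥ P) + f P * 1
    rw [f.linearMap_vsub, vsub_eq_sub]
    ring
  calc φ (Wg.ofAffine g f)
      = φ (Wg.ofAffine g (ι f.linear)) := by
        conv_lhs => rw [eq_linear_add_const, map_add, map_add, map_smul, map_smul,
          annihilatesOne_iff.1 hφ, smul_zero, add_zero]
    _ = f.linear x := (LinearMap.congr_fun hx f.linear).symm

theorem represents_evW_sub_evW (P Q : A) : Represents g (evW g P - evW g Q) (P -ᵥ Q) :=
  fun f _ => (f.linearMap_vsub P Q).symm

theorem represents_secondDiff (P : A) (v : V) : Represents g (secondDiff g P v) 0 := by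
  intro f _
  change f (v +ᵥ P) - 2 * f P + f (-v +ᵥ P) = f.linear 0
  simp only [f.map_vadd, map_neg, map_zero, vadd_eq_add]
  ring

theorem ker_secondDiff {v : V} (hv : g v v ≠ 0) (P : A) :
    LinearMap.ker (secondDiff g P v) = LinearMap.range (Wg.ofAffine g) := by
  refine le_antisymm ?_ (represents_zero_iff.1 (represents_secondDiff P v))
  rintro ⟨δ, hδ, c, hc⟩ hker
  have hcv : c * g v v = 0 := (hc.vadd_sub_two_mul_add_neg_vadd P v).symm.trans hker
  obtain rfl : c = 0 := (mul_eq_zero.1 hcv).resolve_right hv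
  obtain ⟨f, rfl⟩ := hδ.exists_affineMap_coe_eq (zero_smul ℝ g ▸ hc)
  exact ⟨f, rfl⟩

theorem Represents.exists_smul_secondDiff_eq (hφ : Represents g φ 0) {v : V} (hv : g v v ≠ 0)
    (P : A) : ∃ r : ℝ, r • secondDiff g P v = φ := by
  have ker_le : ⨅ _ : Unit, LinearMap.ker (secondDiff g P v) ≤ LinearMap.ker φ := by
    simpa only [ciInf_const, ker_secondDiff hv] using represents_zero_iff.1 hφ
  simpa only [Set.range_const, Submodule.mem_span_singleton] using
    mem_span_of_iInf_ker_le_ker ker_le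

namespace IsCayleyMenger

variable {C : LinearMap.BilinForm ℝ (Module.Dual ℝ (Wg g A))}

theorem apply_eq_neg (hC : IsCayleyMenger g A C) (hφ : Represents g φ x)
    (hψ : Represents g ψ y) : C φ ψ = -g x y :=
  hC.2.2 φ ψ x y hφ.annihilatesOne hψ.annihilatesOne hφ hψ

theorem apply_evW_evW (hC : IsCayleyMenger g A C) (P Q : A) :
    C (evW g P) (evW g Q) = g (P -ᵥ Q) (P -ᵥ Q) / 2 := by
  have h := hC.apply_eq_neg (represents_evW_sub_evW P Q) (represents_evW_sub_evW P Q)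
  obtain ⟨symm, isotropic, -⟩ := hC
  simp only [map_sub, LinearMap.sub_apply, isotropic, symm (evW g Q) (evW g P)] at h
  linarith

theorem apply_secondDiff_evW (hC : IsCayleyMenger g A C) (P : A) (v : V) :
    C (secondDiff g P v) (evW g P) = g v v := by
  simp only [secondDiff, map_add, map_sub, map_smul, LinearMap.add_apply, LinearMap.sub_apply,
    LinearMap.smul_apply, hC.apply_evW_evW, vadd_vsub, vsub_self, map_neg, LinearMap.neg_apply,
    map_zero]
  ring

theorem apply_secondDiff [FiniteDimensional ℝ V] (hC : IsCayleyMenger g A C) (P : A) (v : V) :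
    C (secondDiff g P v) φ = g v v * φ (Wg.ofAffine g (AffineMap.const ℝ A 1)) := by
  set s := φ (Wg.ofAffine g (AffineMap.const ℝ A 1))
  have annihilatesOne_sub : AnnihilatesOne g (φ - s • evW g P) :=
    annihilatesOne_iff.2 (by
      change s - s * 1 = 0
      ring)
  obtain ⟨x, hx⟩ := annihilatesOne_sub.exists_represents
  have orthogonal : C (secondDiff g P v) (φ - s • evW g P) = 0 := by
    rw [hC.apply_eq_neg (represents_secondDiff P v) hx, map_zero, LinearMap.zero_apply, neg_zero]
  rw [map_sub, map_smul, hC.apply_secondDiff_evW, smul_eq_mul, sub_eq_zero] at orthogonal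
  rw [orthogonal, mul_comm]

end IsCayleyMenger

end

/-- If `g` is a nonzero nondegenerate symmetric bilinear form on
`V`, then its Cayley–Menger form `C = CM_g` is nondegenerate on the dual of `W_g`. -/
theorem stmt18 {V A : Type*} [AddCommGroup V] [Module ℝ V] [AddTorsor V A]
    [FiniteDimensional ℝ V]
    (g : LinearMap.BilinForm ℝ V) (hgs : ∀ x y, g x y = g y x) (hg0 : g ≠ 0)
    (hgnd : ∀ v : V, (∀ x : V, g v x = 0) → v = 0)
    (C : LinearMap.BilinForm ℝ (Module.Dual ℝ (Wg g A)))
    (hC : IsCayleyMenger g A C) :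
    ∀ φ : Module.Dual ℝ (Wg g A),
      (∀ ψ : Module.Dual ℝ (Wg g A), C φ ψ = 0) → φ = 0 := by
  intro φ hφ
  obtain ⟨P⟩ : Nonempty A := inferInstance
  obtain ⟨v, hv⟩ := LinearMap.BilinForm.exists_bilinForm_self_ne_zero hg0 ⟨hgs⟩
  have annihilatesOne : AnnihilatesOne g φ := by
    have h := hC.apply_secondDiff (φ := φ) P v
    rw [hC.1, hφ, zero_eq_mul] at h
    exact annihilatesOne_iff.2 (h.resolve_left hv)
  obtain ⟨x, hx⟩ := annihilatesOne.exists_represents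
  obtain rfl : x = 0 := hgnd x fun y => by
    have h := hC.apply_eq_neg hx (represents_evW_sub_evW (y +ᵥ P) P)
    rwa [hφ, vadd_vsub, zero_eq_neg] at h
  obtain ⟨r, rfl⟩ := hx.exists_smul_secondDiff_eq hv P
  have hr : r * g v v = 0 := by
    simpa only [map_smul, LinearMap.smul_apply, hC.apply_secondDiff_evW, smul_eq_mul]
      using hφ (evW g P)
  rw [(mul_eq_zero.1 hr).resolve_right hv, zero_smul]
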